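/- arXiv:1805.02604 — 3 statements merged into one kernel-verified Lean document; each statement's English description precedes it below -/
import Mathlib

section
/- Let N ≥ 1 and let η, ζ : ℝ^N → ℝ^N be of class C³ with all partial derivatives up to order 3 bounded, and with η, ζ themselves bounded. Define Φ_t(x) := x + t·η(x) + (t²/2)·ζ(x). Then there exists τ > 0 such that for every t with |t| < τ the map Φ_t : ℝ^N → ℝ^N is a bijection, and for every y ∈ ℝ^N the curve t ↦ Φ_t⁻¹(y) is twice differentiable at t = 0 with Φ_0⁻¹(y) = y, first derivative −η(y), and second derivative 2((η·∇)η)(y) − ζ(y) at t = 0. -/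
/-!
For small `t` the map `Φ_t` is the identity plus a map with Lipschitz constant `< 1`, hence a
bijection. Its differential in `x` is the identity plus an operator of norm `< 1`, so by the
implicit function theorem the curve `X(t) = Φ_t⁻¹(y)` is `C¹`. Along it, `X(t) = y - t G(t)` with
`G(t) = η(X(t)) + (t/2) ζ(X(t))`, and for any `C¹` curve `G` the product `t G(t)` is twice
differentiable at `0`, with derivatives `G(0)` and `2 G'(0)`. Thus `X'(0) = -η(y)`, and the chain
rule gives `X''(0) = -2 G'(0) = 2 Dη(y) η(y) - ζ(y)`.
-/

open Filter MeasureTheory Topology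
open scoped RealInnerProductSpace

namespace PaperAC

/-- The partial derivative `∂f/∂x_j` of a scalar function on `ℝ^N`. -/
noncomputable def pdv {N : ℕ} (f : (Fin N → ℝ) → ℝ) (j : Fin N) (x : Fin N → ℝ) : ℝ :=
  fderiv ℝ f x (Pi.single j 1)

/-- The advection field `(η·∇)η`, with components `((η·∇)η)^i = ∑_j η^j ∂η^i/∂x_j`. -/
noncomputable def advf {N : ℕ} (η : (Fin N → ℝ) → (Fin N → ℝ)) (x : Fin N → ℝ) :
    Fin N → ℝ :=
  fun i => ∑ j, η x j * pdv (fun z => η z i) j x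

/-- The gradient `∇u` of a scalar function on `ℝ^N`. -/
noncomputable def grad {N : ℕ} (u : (Fin N → ℝ) → ℝ) (x : Fin N → ℝ) : Fin N → ℝ :=
  fun i => pdv u i x

/-- `X₀ := (D²u·η, η) + (∇u, 2(η·∇)η − ζ)`. -/
noncomputable def X0 {N : ℕ} (u : (Fin N → ℝ) → ℝ) (η ζ : (Fin N → ℝ) → (Fin N → ℝ))
    (y : Fin N → ℝ) : ℝ :=
  (∑ i, ∑ j, pdv (pdv u i) j y * η y i * η y j)
    + ∑ i, pdv u i y * (2 * advf η y i - ζ y i)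

/-- `−∇u·η`. -/
noncomputable def nGradDot {N : ℕ} (u : (Fin N → ℝ) → ℝ) (η : (Fin N → ℝ) → (Fin N → ℝ))
    (x : Fin N → ℝ) : ℝ :=
  -(∑ i, pdv u i x * η x i)

/-- `F_z`, the partial derivative of `F = F(z,p)` in the scalar variable. -/
noncomputable def Fz {N : ℕ} (F : ℝ × (Fin N → ℝ) → ℝ) (z : ℝ) (p : Fin N → ℝ) : ℝ :=
  fderiv ℝ F (z, p) (1, 0)

/-- `F_{p_i}`. -/
noncomputable def Fp {N : ℕ} (F : ℝ × (Fin N → ℝ) → ℝ) (i : Fin N) (z : ℝ) (p : Fin N → ℝ) :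
    ℝ :=
  fderiv ℝ F (z, p) (0, Pi.single i 1)

/-- `F_{zz}`. -/
noncomputable def Fzz {N : ℕ} (F : ℝ × (Fin N → ℝ) → ℝ) (z : ℝ) (p : Fin N → ℝ) : ℝ :=
  fderiv ℝ (fun q => fderiv ℝ F q (1, 0)) (z, p) (1, 0)

/-- `F_{z p_i}`. -/
noncomputable def Fzp {N : ℕ} (F : ℝ × (Fin N → ℝ) → ℝ) (i : Fin N) (z : ℝ) (p : Fin N → ℝ) :
    ℝ :=
  fderiv ℝ (fun q => fderiv ℝ F q ((0 : ℝ), Pi.single i 1)) (z, p) (1, 0)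

/-- `F_{p_i p_j}`. -/
noncomputable def Fpp {N : ℕ} (F : ℝ × (Fin N → ℝ) → ℝ) (i j : Fin N) (z : ℝ)
    (p : Fin N → ℝ) : ℝ :=
  fderiv ℝ (fun q => fderiv ℝ F q ((0 : ℝ), Pi.single j 1)) (z, p) ((0 : ℝ), Pi.single i 1)

/-- `𝔄₁(t) = A(u ∘ Φ_t⁻¹) = ∫_Ω F(u_t, ∇u_t)`, the inner deformation of the functional
`A(w) := ∫_Ω F(w, ∇w)`. -/
noncomputable def innerA {N : ℕ} (Ω : Set (Fin N → ℝ)) (F : ℝ × (Fin N → ℝ) → ℝ)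
    (u : (Fin N → ℝ) → ℝ) (Φ : ℝ → (Fin N → ℝ) → (Fin N → ℝ)) (t : ℝ) : ℝ :=
  ∫ y in Ω, F (u (Function.invFun (Φ t) y),
      grad (fun z => u (Function.invFun (Φ t) z)) y)

/-- `t ↦ A(u + tφ) = ∫_Ω F(u + tφ, ∇u + t∇φ)`, the outer deformation of the functional
`A(w) := ∫_Ω F(w, ∇w)`. -/
noncomputable def gateauxA {N : ℕ} (Ω : Set (Fin N → ℝ)) (F : ℝ × (Fin N → ℝ) → ℝ)
    (u φ : (Fin N → ℝ) → ℝ) (t : ℝ) : ℝ :=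
  ∫ x in Ω, F (u x + t * φ x, fun i => pdv u i x + t * pdv φ i x)

/-- The matrix `M_t(x)` with entries `δ_{ij} + t ∂η^i/∂x_j + (t²/2) ∂W^i/∂x_j`. -/
noncomputable def defMat {N : ℕ} (η W : (Fin N → ℝ) → (Fin N → ℝ)) (t : ℝ)
    (x : Fin N → ℝ) : Matrix (Fin N) (Fin N) ℝ :=
  Matrix.of fun i j =>
    (if i = j then (1 : ℝ) else 0) + t * pdv (fun z => η z i) j x
      + (t ^ 2 / 2) * pdv (fun z => W z i) j x

/-- `Φ(a) := ∫_0^a |s² − 1| ds`. -/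
noncomputable def PhiAC (a : ℝ) : ℝ := ∫ s in (0 : ℝ)..a, |s ^ 2 - 1|

/-- All partial derivatives (= iterated Fréchet derivatives) of `f` up to order `n` are
bounded; the case `i = 0` says `f` itself is bounded. -/
def BddUpTo {N : ℕ} {E : Type*} [NormedAddCommGroup E] [NormedSpace ℝ E]
    (n : ℕ) (f : (Fin N → ℝ) → E) : Prop :=
  ∀ i : ℕ, i ≤ n → ∃ C : ℝ, ∀ x, ‖iteratedFDeriv ℝ i f x‖ ≤ C

open scoped NNReal

section PerturbationOfIdentity

variable {E : Type*} [NormedAddCommGroup E] [NormedSpace ℝ E] [CompleteSpace E]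

theorem bijective_id_add_of_lipschitzWith {f : E → E} {K : ℝ≥0} (hf : LipschitzWith K f)
    (hK : K < 1) : Function.Bijective fun x => x + f x := by
  have happrox : ApproximatesLinearOn (fun x => x + f x)
      (ContinuousLinearEquiv.refl ℝ E : E →L[ℝ] E) Set.univ K := by
    rw [ApproximatesLinearOn.approximatesLinearOn_iff_lipschitzOnWith, lipschitzOnWith_univ]
    convert! hf using 2 with x
    ext x
    simp
  refine (happrox.toHomeomorph _ ?_).bijective
  rcases subsingleton_or_nontrivial E with hE | hE
  · exact Or.inl hE
  · exact Or.inr (by simpa using hK)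

theorem isInvertible_id_add_of_norm_lt_one {A : E →L[ℝ] E} (hA : ‖A‖ < 1) :
    (ContinuousLinearMap.id ℝ E + A).IsInvertible := by
  have hunit : IsUnit (1 - -A) := isUnit_one_sub_of_norm_lt_one (by rwa [norm_neg])
  rw [sub_neg_eq_add] at hunit
  exact ⟨ContinuousLinearEquiv.ofUnit hunit.unit, rfl⟩

variable {P : Type*} [NormedAddCommGroup P] [NormedSpace ℝ P]

theorem isInvertible_fderiv_snd_add_comp_inr {h : P × E → E} {p : P} {x : E}
    (hh : DifferentiableAt ℝ h (p, x)) {K : ℝ≥0} (hK : K < 1)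
    (hlip : LipschitzWith K fun x => h (p, x)) :
    (fderiv ℝ (fun q : P × E => q.2 + h q) (p, x) ∘L .inr ℝ P E).IsInvertible := by
  have hpartial : HasFDerivAt (fun x => h (p, x)) (fderiv ℝ h (p, x) ∘L .inr ℝ P E) x :=
    hh.hasFDerivAt.comp x (hasFDerivAt_prodMk_right p x)
  rw [(hasFDerivAt_snd.fun_add hh.hasFDerivAt).fderiv, ContinuousLinearMap.add_comp,
    ContinuousLinearMap.snd_comp_inr]
  exact isInvertible_id_add_of_norm_lt_one ((hpartial.le_of_lipschitz hlip).trans_lt hK)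

variable [CompleteSpace P] {n : WithTop ℕ∞}

theorem contDiffAt_of_unique_implicit_solution
    {F : Type*} [NormedAddCommGroup F] [NormedSpace ℝ F] [CompleteSpace F]
    {f : P × E → F} {X : P → E} {p₀ : P} (hf : ContDiffAt ℝ n f (p₀, X p₀)) (hn : n ≠ 0)
    (hinv : (fderiv ℝ f (p₀, X p₀) ∘L .inr ℝ P E).IsInvertible)
    (huniq : ∀ᶠ p in 𝓝 p₀, ∀ x, f (p, x) = f (p₀, X p₀) → x = X p) :
    ContDiffAt ℝ n X p₀ := by
  refine (hf.contDiffAt_implicitFunction hn hinv).congr_of_eventuallyEq ?_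
  filter_upwards [hf.eventually_apply_implicitFunction hn hinv, huniq] with p hp hXp
  exact (hXp _ hp).symm

theorem contDiffAt_invFun_id_add {h : P × E → E} (hh : ContDiff ℝ n h) (hn : n ≠ 0) {p₀ : P}
    (hlip : ∀ᶠ p in 𝓝 p₀, ∃ K < 1, LipschitzWith K fun x => h (p, x)) (y : E) :
    ContDiffAt ℝ n (fun p => Function.invFun (fun x => x + h (p, x)) y) p₀ := by
  have hbij : ∀ᶠ p in 𝓝 p₀, Function.Bijective fun x => x + h (p, x) :=
    hlip.mono fun p ⟨K, hK, hp⟩ => bijective_id_add_of_lipschitzWith hp hK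
  set X : P → E := fun p => Function.invFun (fun x => x + h (p, x)) y
  have hX : ∀ᶠ p in 𝓝 p₀, X p + h (p, X p) = y :=
    hbij.mono fun p hp => Function.rightInverse_invFun hp.surjective y
  obtain ⟨K, hK, hp₀⟩ := hlip.self_of_nhds
  refine contDiffAt_of_unique_implicit_solution (contDiff_snd.add hh).contDiffAt hn
    (isInvertible_fderiv_snd_add_comp_inr (hh.differentiable hn _) hK hp₀) ?_
  filter_upwards [hbij, hX] with p hp hXp x hx
  exact hp.injective ((hx.trans hX.self_of_nhds).trans hXp.symm)

end PerturbationOfIdentity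

section SubSMul

variable {E : Type*} [NormedAddCommGroup E] [NormedSpace ℝ E] {G : ℝ → E} {a : ℝ}

theorem hasDerivAt_sub_smul_of_continuousAt (hG : ContinuousAt G a) :
    HasDerivAt (fun t => (t - a) • G t) (G a) a := by
  rw [hasDerivAt_iff_tendsto_slope]
  refine (hG.tendsto.mono_left nhdsWithin_le_nhds).congr' ?_
  filter_upwards [self_mem_nhdsWithin] with t ht
  simp [slope_def_module, smul_smul, inv_mul_cancel₀ (sub_ne_zero.2 ht)]

theorem hasDerivAt_deriv_sub_smul (hG : ContDiffAt ℝ 1 G a) :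
    HasDerivAt (deriv fun t => (t - a) • G t) ((2 : ℝ) • deriv G a) a := by
  have hderiv : (deriv fun t => (t - a) • G t) =ᶠ[𝓝 a] fun t => (t - a) • deriv G t + G t := by
    filter_upwards [hG.eventually (by simp)] with t ht
    have hGt : HasDerivAt G (deriv G t) t := (ht.differentiableAt one_ne_zero).hasDerivAt
    simpa using (((hasDerivAt_id' t).sub_const a).fun_smul hGt).deriv
  have hcont : ContinuousAt (deriv G) a := by
    simpa using ((hG.fderiv_right (m := 0) (by norm_num)).clm_apply
      (contDiffAt_const (c := (1 : ℝ)))).continuousAt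
  rw [two_smul]
  exact ((hasDerivAt_sub_smul_of_continuousAt hcont).fun_add
    (hG.differentiableAt one_ne_zero).hasDerivAt).congr_of_eventuallyEq hderiv

end SubSMul

section SecondOrderDeformation

variable {E : Type*} [NormedAddCommGroup E] [NormedSpace ℝ E] {η ζ : E → E}

/-- The second-order deformation of the identity `Φ_t(x) = x + t η(x) + (t²/2) ζ(x)`, as a
function of the time `t` and the point `x`. -/
noncomputable def secondOrderDeformation (η ζ : E → E) (t : ℝ) (x : E) : E :=
  x + t • η x + (t ^ 2 / 2) • ζ x

theorem secondOrderDeformation_eq_id_add (η ζ : E → E) (t : ℝ) :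
    secondOrderDeformation η ζ t = fun x => x + (t • η x + (t ^ 2 / 2) • ζ x) :=
  funext fun x => add_assoc x _ _

theorem eventually_lipschitzWith_smul_add_sq_smul {K L : ℝ≥0} (hη : LipschitzWith K η)
    (hζ : LipschitzWith L ζ) :
    ∀ᶠ t : ℝ in 𝓝 0, ∃ M < 1, LipschitzWith M fun x => t • η x + (t ^ 2 / 2) • ζ x := by
  have hcont : Continuous fun t : ℝ => ‖t‖₊ * K + ‖t ^ 2 / 2‖₊ * L := by fun_prop
  filter_upwards [hcont.tendsto' 0 0 (by simp) |>.eventually_lt_const one_pos] with t ht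
  exact ⟨_, ht, ((lipschitzWith_smul t).comp hη).add ((lipschitzWith_smul (t ^ 2 / 2)).comp hζ)⟩

theorem deriv_and_hasDerivAt_deriv_of_secondOrderDeformation_eq {X : ℝ → E} {y : E}
    (hη : ContDiffAt ℝ 1 η y) (hζ : ContDiffAt ℝ 1 ζ y) (hX : ContDiffAt ℝ 1 X 0)
    (hXy : ∀ᶠ t in 𝓝 0, secondOrderDeformation η ζ t (X t) = y) :
    deriv X 0 = -η y ∧ HasDerivAt (deriv X) ((2 : ℝ) • fderiv ℝ η y (η y) - ζ y) 0 := by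
  obtain rfl : X 0 = y := by simpa [secondOrderDeformation] using hXy.self_of_nhds
  set G : ℝ → E := fun t => η (X t) + (t / 2) • ζ (X t) with hGdef
  have hG : ContDiffAt ℝ 1 G 0 := by fun_prop
  have hXG : X =ᶠ[𝓝 0] fun t => X 0 - (t - 0) • G t := by
    filter_upwards [hXy] with t ht
    rw [eq_sub_iff_add_eq, ← ht, secondOrderDeformation]
    module
  have hX₁ : HasDerivAt X (-η (X 0)) 0 := by
    simpa [hGdef] using ((hasDerivAt_sub_smul_of_continuousAt hG.continuousAt).const_sub
      (X 0)).congr_of_eventuallyEq hXG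
  have hG₁ : HasDerivAt G (-fderiv ℝ η (X 0) (η (X 0)) + (1 / 2 : ℝ) • ζ (X 0)) 0 := by
    have hηX := (hη.differentiableAt one_ne_zero).hasFDerivAt.comp_hasDerivAt 0 hX₁
    have hζX := (hζ.differentiableAt one_ne_zero).hasFDerivAt.comp_hasDerivAt 0 hX₁
    simpa using hηX.fun_add (((hasDerivAt_id' (0 : ℝ)).div_const 2).fun_smul hζX)
  refine ⟨hX₁.deriv, ?_⟩
  have hX₂ : HasDerivAt (deriv X) (-((2 : ℝ) • deriv G 0)) 0 := by
    refine (hasDerivAt_deriv_sub_smul hG).fun_neg.congr_of_eventuallyEq ?_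
    filter_upwards [hXG.deriv] with t ht
    rw [ht, deriv_const_sub]
  convert! hX₂ using 1
  rw [hG₁.deriv]
  module

variable [CompleteSpace E]

theorem inverse_of_second_order_deformation_general {K L : ℝ≥0} (hη : ContDiff ℝ 1 η)
    (hηK : LipschitzWith K η) (hζ : ContDiff ℝ 1 ζ) (hζL : LipschitzWith L ζ) :
    ∃ τ > (0 : ℝ), (∀ t : ℝ, |t| < τ → Function.Bijective (secondOrderDeformation η ζ t)) ∧
      ∀ y : E, ∃ c' : ℝ → E,
        Function.invFun (secondOrderDeformation η ζ 0) y = y ∧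
        (∀ t : ℝ, |t| < τ →
          HasDerivAt (fun s : ℝ => Function.invFun (secondOrderDeformation η ζ s) y) (c' t) t) ∧
        c' 0 = -η y ∧
        HasDerivAt c' ((2 : ℝ) • fderiv ℝ η y (η y) - ζ y) 0 := by
  have hlip := eventually_lipschitzWith_smul_add_sq_smul hηK hζL
  obtain ⟨τ, hτ, hball⟩ := Metric.eventually_nhds_iff_ball.1 hlip.eventually_nhds
  replace hball (t : ℝ) (ht : |t| < τ) := hball t (by simpa using ht)
  have hbij (t : ℝ) (ht : |t| < τ) : Function.Bijective (secondOrderDeformation η ζ t) := by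
    obtain ⟨M, hM, htM⟩ := (hball t ht).self_of_nhds
    rw [secondOrderDeformation_eq_id_add]
    exact bijective_id_add_of_lipschitzWith htM hM
  refine ⟨τ, hτ, hbij, fun y => ?_⟩
  set X : ℝ → E := fun t => Function.invFun (secondOrderDeformation η ζ t) y with hXdef
  have hX (t : ℝ) (ht : |t| < τ) : ContDiffAt ℝ 1 X t := by
    simp only [hXdef, secondOrderDeformation_eq_id_add]
    exact contDiffAt_invFun_id_add (h := fun q : ℝ × E => q.1 • η q.2 + (q.1 ^ 2 / 2) • ζ q.2)
      (by fun_prop) one_ne_zero (hball t ht) y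
  have hXy : ∀ᶠ t in 𝓝 0, secondOrderDeformation η ζ t (X t) = y := by
    filter_upwards [Metric.ball_mem_nhds 0 hτ] with t ht
    exact Function.rightInverse_invFun (hbij t (by simpa using ht)).surjective y
  obtain ⟨hX₁, hX₂⟩ := deriv_and_hasDerivAt_deriv_of_secondOrderDeformation_eq hη.contDiffAt
    hζ.contDiffAt (hX 0 (by simpa using hτ)) hXy
  have hX₀ : X 0 = y := by simpa [secondOrderDeformation] using hXy.self_of_nhds
  exact ⟨deriv X, hX₀, fun t ht => ((hX t ht).differentiableAt one_ne_zero).hasDerivAt, hX₁, hX₂⟩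

end SecondOrderDeformation

theorem BddUpTo.exists_lipschitzWith {N n : ℕ} {F : Type*} [NormedAddCommGroup F]
    [NormedSpace ℝ F] {f : (Fin N → ℝ) → F} (hb : BddUpTo n f) (hn : 1 ≤ n)
    (hf : Differentiable ℝ f) : ∃ K, LipschitzWith K f := by
  obtain ⟨C, hC⟩ := hb 1 hn
  simp only [norm_iteratedFDeriv_one] at hC
  exact ⟨C.toNNReal, lipschitzWith_of_nnnorm_fderiv_le hf fun x =>
    NNReal.le_toNNReal_of_coe_le (hC x)⟩

theorem advf_eq_fderiv_apply_self {N : ℕ} {η : (Fin N → ℝ) → Fin N → ℝ} {x : Fin N → ℝ}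
    (hη : DifferentiableAt ℝ η x) : advf η x = fderiv ℝ η x (η x) := by
  ext i
  have hpdv (j : Fin N) : pdv (fun z => η z i) j x = fderiv ℝ η x (Pi.single j 1) i := by
    rw [pdv, fderiv_apply hη]
    rfl
  conv_rhs => rw [pi_eq_sum_univ' (η x)]
  simp [advf, hpdv]

/-- For bounded `C³` vector fields `η, ζ` with bounded derivatives up to
order 3, the deformation `Φ_t(x) := x + t η(x) + (t²/2) ζ(x)` is a bijection of `ℝ^N` for
all small `|t|`, and for every `y` the curve `t ↦ Φ_t⁻¹(y)` is twice differentiable at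
`t = 0` with `Φ_0⁻¹(y) = y`, first derivative `−η(y)` and second derivative
`2((η·∇)η)(y) − ζ(y)` at `t = 0`. -/
theorem inverse_of_second_order_deformation
    (N : ℕ) (hN : 1 ≤ N)
    (η ζ : (Fin N → ℝ) → (Fin N → ℝ))
    (hη : ContDiff ℝ 3 η) (hηb : BddUpTo 3 η)
    (hζ : ContDiff ℝ 3 ζ) (hζb : BddUpTo 3 ζ)
    (Φ : ℝ → (Fin N → ℝ) → (Fin N → ℝ))
    (hΦ : ∀ t x, Φ t x = x + t • η x + (t ^ 2 / 2) • ζ x) :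
    ∃ τ > (0 : ℝ), (∀ t : ℝ, |t| < τ → Function.Bijective (Φ t)) ∧
      ∀ y : Fin N → ℝ, ∃ c' : ℝ → (Fin N → ℝ),
        Function.invFun (Φ 0) y = y ∧
        (∀ t : ℝ, |t| < τ →
          HasDerivAt (fun s : ℝ => Function.invFun (Φ s) y) (c' t) t) ∧
        c' 0 = -η y ∧
        HasDerivAt c' (fun i => 2 * advf η y i - ζ y i) 0 := by
  obtain rfl : Φ = secondOrderDeformation η ζ := funext₂ hΦ
  have hη₁ : ContDiff ℝ 1 η := hη.of_le (by norm_num)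
  have hζ₁ : ContDiff ℝ 1 ζ := hζ.of_le (by norm_num)
  obtain ⟨K, hK⟩ := hηb.exists_lipschitzWith (by norm_num) (hη₁.differentiable one_ne_zero)
  obtain ⟨L, hL⟩ := hζb.exists_lipschitzWith (by norm_num) (hζ₁.differentiable one_ne_zero)
  have hgeneral := inverse_of_second_order_deformation_general hη₁ hK hζ₁ hL
  simp only [← advf_eq_fderiv_apply_self (hη₁.differentiable one_ne_zero _)] at hgeneral
  exact hgeneral

end PaperAC
end

section
/- Let N ≥ 1, let η, ζ : ℝ^N → ℝ^N be bounded and of class C³ with all partial derivatives up to order 3 bounded, and let u : ℝ^N → ℝ be of class C³ with all partial derivatives up to order 3 bounded. Define Φ_t(x) := x + t·η(x) + (t²/2)·ζ(x) and let τ > 0 be such that Φ_t is a bijection of ℝ^N for |t| < τ. Then for every y ∈ ℝ^N the function t ↦ u(Φ_t⁻¹(y)) is twice differentiable at t = 0, with value u(y), first derivative −∇u(y)·η(y), and second derivative X₀(y) := Σ_{i,j} ∂²u/∂y_i∂y_j (y) η^i(y) η^j(y) + Σ_i ∂u/∂y_i (y) (2((η·∇)η)^i(y) − ζ^i(y)) at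 t = 0. -/
open Filter MeasureTheory Topology
open scoped RealInnerProductSpace

namespace PaperAC

/-!
Since `Φ_0 = id`, the implicit function theorem solves `Φ_t(x(t)) = y` near `t = 0` by a `C¹` curve
`x`, and injectivity of `Φ_t` identifies `x(t)` with `Φ_t⁻¹(y)`. The equation reads
`x(t) = y - t v(t)` with `v(t) = η(x(t)) + (t/2) ζ(x(t))`. Although `v` is only `C¹`, the extra
factor `t` makes `t v(t)` twice differentiable at `0`, with second derivative `2 v'(0)`. Hence
`x'(0) = -η(y)` and `x''(0) = -2 v'(0) = 2 Dη(y)η(y) - ζ(y)`, and the second-order chain rule for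
`u ∘ x` gives `X₀(y)`.
-/

section SecondOrderCalculus

variable {𝕜 : Type*} [NontriviallyNormedField 𝕜]
  {E : Type*} [NormedAddCommGroup E] [NormedSpace 𝕜 E]
  {F : Type*} [NormedAddCommGroup F] [NormedSpace 𝕜 F]

theorem eventually_differentiableAt_of_contDiffAt_one {f : E → F} {x : E}
    (hf : ContDiffAt 𝕜 1 f x) : ∀ᶠ z in 𝓝 x, DifferentiableAt 𝕜 f z :=
  (hf.eventually (by simp)).mono fun _ hz => hz.differentiableAt one_ne_zero

theorem hasDerivAt_id_smul_zero {f : 𝕜 → E} (hf : ContinuousAt f 0) :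
    HasDerivAt (fun t => t • f t) (f 0) 0 := by
  rw [hasDerivAt_iff_tendsto_slope_zero]
  refine (hf.tendsto.mono_left nhdsWithin_le_nhds).congr' ?_
  filter_upwards [self_mem_nhdsWithin] with t (ht : t ≠ 0)
  simp [smul_smul, ht]

theorem hasDerivAt_deriv_id_smul_zero {f : 𝕜 → E} (hf : ContDiffAt 𝕜 1 f 0) :
    HasDerivAt (deriv fun t => t • f t) ((2 : 𝕜) • deriv f 0) 0 := by
  have hderiv : (deriv fun t => t • f t) =ᶠ[𝓝 0] fun t => t • deriv f t + f t := by
    filter_upwards [eventually_differentiableAt_of_contDiffAt_one hf] with t ht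
    simpa using ((hasDerivAt_id t).fun_smul ht.hasDerivAt).deriv
  have hcont : ContinuousAt (deriv f) 0 := (hf.derivWithin (m := 0) le_rfl).continuousAt
  rw [two_smul]
  exact ((hasDerivAt_id_smul_zero hcont).fun_add
    (hf.differentiableAt one_ne_zero).hasDerivAt).congr_of_eventuallyEq hderiv

theorem hasDerivAt_deriv_comp_of_eq {u : E → F} {x : 𝕜 → E} {y a : E} {t : 𝕜}
    (hu : ∀ᶠ z in 𝓝 y, DifferentiableAt 𝕜 u z) (hu' : DifferentiableAt 𝕜 (fderiv 𝕜 u) y)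
    (hx : ∀ᶠ s in 𝓝 t, DifferentiableAt 𝕜 x s) (hx' : HasDerivAt (deriv x) a t)
    (hy : x t = y) :
    HasDerivAt (deriv fun s => u (x s))
      (fderiv 𝕜 (fderiv 𝕜 u) y (deriv x t) (deriv x t) + fderiv 𝕜 u y a) t := by
  subst hy
  have hxt : DifferentiableAt 𝕜 x t := hx.self_of_nhds
  have hderiv : (deriv fun s => u (x s)) =ᶠ[𝓝 t] fun s => fderiv 𝕜 u (x s) (deriv x s) := by
    filter_upwards [hx, hxt.continuousAt.eventually hu] with s hxs hus
    exact (hus.hasFDerivAt.comp_hasDerivAt s hxs.hasDerivAt).deriv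
  exact ((hu'.hasFDerivAt.comp_hasDerivAt t hxt.hasDerivAt).clm_apply hx').congr_of_eventuallyEq
    hderiv

end SecondOrderCalculus

section Deformation

variable {𝕜 : Type*} [RCLike 𝕜] {E : Type*} [NormedAddCommGroup E] [NormedSpace 𝕜 E]
  {F : Type*} [NormedAddCommGroup F] [NormedSpace 𝕜 F]

/-- The second-order deformation of the identity `Φ_t(x) := x + t η(x) + (t²/2) ζ(x)`, for vector
fields on a normed space over `ℝ` or `ℂ`. -/
def deformation (η ζ : E → E) (t : 𝕜) (x : E) : E :=
  x + t • η x + (t ^ 2 / 2) • ζ x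

variable {η ζ : E → E} {y : E}

theorem deformation_zero (η ζ : E → E) : deformation η ζ (0 : 𝕜) = id := by
  funext x
  simp [deformation]

theorem contDiffAt_deformation {n : WithTop ℕ∞} (hη : ContDiffAt 𝕜 n η y)
    (hζ : ContDiffAt 𝕜 n ζ y) (t : 𝕜) :
    ContDiffAt 𝕜 n (fun p : 𝕜 × E => deformation η ζ p.1 p.2) (t, y) := by
  have hη' : ContDiffAt 𝕜 n (fun p : 𝕜 × E => η p.2) (t, y) := hη.comp (t, y) contDiffAt_snd
  have hζ' : ContDiffAt 𝕜 n (fun p : 𝕜 × E => ζ p.2) (t, y) := hζ.comp (t, y) contDiffAt_snd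
  exact (contDiffAt_snd.add (contDiffAt_fst.smul hη')).add
    (((contDiffAt_fst.pow 2).div_const 2).smul hζ')

theorem exists_contDiffAt_deformation_eq [CompleteSpace E] {n : WithTop ℕ∞} (hn : n ≠ 0)
    (hη : ContDiffAt 𝕜 n η y) (hζ : ContDiffAt 𝕜 n ζ y) :
    ∃ x : 𝕜 → E, ContDiffAt 𝕜 n x 0 ∧ ∀ᶠ t in 𝓝 0, deformation η ζ t (x t) = y := by
  have hΦ := contDiffAt_deformation hη hζ (0 : 𝕜)
  have hpartial : fderiv 𝕜 (fun p : 𝕜 × E => deformation η ζ p.1 p.2) (0, y) ∘L .inr 𝕜 𝕜 E =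
      .id 𝕜 E := by
    refine ((hΦ.differentiableAt hn).hasFDerivAt.comp y
      (hasFDerivAt_prodMk_right (0 : 𝕜) y)).unique ?_
    simpa only [Function.comp_def, deformation_zero] using hasFDerivAt_id y
  have hinv : (fderiv 𝕜 (fun p : 𝕜 × E => deformation η ζ p.1 p.2) (0, y) ∘L
      .inr 𝕜 𝕜 E).IsInvertible := hpartial ▸ ⟨.refl 𝕜 E, rfl⟩
  refine ⟨hΦ.implicitFunction hn hinv, hΦ.contDiffAt_implicitFunction hn hinv, ?_⟩
  simpa only [deformation_zero, id] using hΦ.eventually_apply_implicitFunction hn hinv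

-- `invFun` is junk off the range of `Φ_t`; near `t = 0` the implicit function theorem puts `y` in
-- that range.
theorem eventually_deformation_invFun_eq [CompleteSpace E] (hη : ContDiffAt 𝕜 1 η y)
    (hζ : ContDiffAt 𝕜 1 ζ y) :
    ∀ᶠ t : 𝕜 in 𝓝 0, deformation η ζ t (Function.invFun (deformation η ζ t) y) = y := by
  obtain ⟨x, -, hxy⟩ := exists_contDiffAt_deformation_eq (𝕜 := 𝕜) one_ne_zero hη hζ
  exact hxy.mono fun t ht => Function.invFun_eq ⟨x t, ht⟩

theorem contDiffAt_invFun_deformation [CompleteSpace E] {n : WithTop ℕ∞} (hn : n ≠ 0)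
    (hη : ContDiffAt 𝕜 n η y) (hζ : ContDiffAt 𝕜 n ζ y)
    (hinj : ∀ᶠ t : 𝕜 in 𝓝 0, Function.Injective (deformation η ζ t)) :
    ContDiffAt 𝕜 n (fun t : 𝕜 => Function.invFun (deformation η ζ t) y) 0 := by
  obtain ⟨x, hx, hxy⟩ := exists_contDiffAt_deformation_eq hn hη hζ
  refine hx.congr_of_eventuallyEq ?_
  filter_upwards [hinj, hxy] with t hinj_t hxy_t
  rw [← hxy_t, Function.leftInverse_invFun hinj_t (x t)]

section Trajectory

variable {x : 𝕜 → E}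

theorem apply_zero_of_deformation_eq (hxy : ∀ᶠ t in 𝓝 0, deformation η ζ t (x t) = y) :
    x 0 = y := by
  simpa only [deformation_zero, id] using hxy.self_of_nhds

theorem eventuallyEq_sub_smul_of_deformation_eq
    (hxy : ∀ᶠ t in 𝓝 0, deformation η ζ t (x t) = y) :
    x =ᶠ[𝓝 0] fun t => y - t • (η (x t) + t • (2⁻¹ : 𝕜) • ζ (x t)) := by
  filter_upwards [hxy] with t ht
  rw [← ht, deformation]
  module

theorem hasDerivAt_of_deformation_eq (hη : ContinuousAt η y) (hζ : ContinuousAt ζ y)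
    (hx : ContinuousAt x 0) (hxy : ∀ᶠ t in 𝓝 0, deformation η ζ t (x t) = y) :
    HasDerivAt x (-η y) 0 := by
  obtain rfl := apply_zero_of_deformation_eq hxy
  have hv : ContinuousAt (fun t => η (x t) + t • (2⁻¹ : 𝕜) • ζ (x t)) 0 :=
    (hη.comp hx).add (continuousAt_id.smul ((hζ.comp hx).const_smul 2⁻¹))
  simpa using ((hasDerivAt_id_smul_zero hv).const_sub (x 0)).congr_of_eventuallyEq
    (eventuallyEq_sub_smul_of_deformation_eq hxy)

theorem hasDerivAt_deriv_of_deformation_eq (hη : ContDiffAt 𝕜 1 η y) (hζ : ContDiffAt 𝕜 1 ζ y)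
    (hx : ContDiffAt 𝕜 1 x 0) (hxy : ∀ᶠ t in 𝓝 0, deformation η ζ t (x t) = y) :
    HasDerivAt (deriv x) ((2 : 𝕜) • fderiv 𝕜 η y (η y) - ζ y) 0 := by
  have hx' := hasDerivAt_of_deformation_eq hη.continuousAt hζ.continuousAt hx.continuousAt hxy
  have heq := eventuallyEq_sub_smul_of_deformation_eq hxy
  obtain rfl := apply_zero_of_deformation_eq hxy
  set v : 𝕜 → E := fun t => η (x t) + t • (2⁻¹ : 𝕜) • ζ (x t)
  have hζx : ContDiffAt 𝕜 1 (fun t => (2⁻¹ : 𝕜) • ζ (x t)) 0 := (hζ.comp 0 hx).const_smul 2⁻¹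
  have hv : ContDiffAt 𝕜 1 v 0 := (hη.comp 0 hx).add (contDiffAt_id.smul hζx)
  have hv' : HasDerivAt v (fderiv 𝕜 η (x 0) (-η (x 0)) + (2⁻¹ : 𝕜) • ζ (x 0)) 0 :=
    ((hη.differentiableAt one_ne_zero).hasFDerivAt.comp_hasDerivAt 0 hx').fun_add
      (hasDerivAt_id_smul_zero hζx.continuousAt)
  have hderiv : deriv x =ᶠ[𝓝 0] fun t => -deriv (fun s => s • v s) t := by
    filter_upwards [heq.eventuallyEq_nhds] with t ht
    rw [ht.deriv_eq, deriv_const_sub]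
  refine ((hasDerivAt_deriv_id_smul_zero hv).fun_neg.congr_of_eventuallyEq hderiv).congr_deriv ?_
  rw [hv'.deriv, map_neg]
  module

end Trajectory

theorem composition_with_inverse_deformation_general [CompleteSpace E] {u : E → F}
    (hη : ContDiffAt 𝕜 1 η y) (hζ : ContDiffAt 𝕜 1 ζ y)
    (hu : ∀ᶠ z in 𝓝 y, DifferentiableAt 𝕜 u z) (hu' : DifferentiableAt 𝕜 (fderiv 𝕜 u) y)
    (hinj : ∀ᶠ t : 𝕜 in 𝓝 0, Function.Injective (deformation η ζ t)) :
    let f : 𝕜 → F := fun t => u (Function.invFun (deformation η ζ t) y)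
    f 0 = u y ∧ (∀ᶠ t in 𝓝 0, DifferentiableAt 𝕜 f t) ∧
      deriv f 0 = -fderiv 𝕜 u y (η y) ∧
      HasDerivAt (deriv f) (fderiv 𝕜 (fderiv 𝕜 u) y (η y) (η y) +
        fderiv 𝕜 u y ((2 : 𝕜) • fderiv 𝕜 η y (η y) - ζ y)) 0 := by
  have hx := contDiffAt_invFun_deformation one_ne_zero hη hζ hinj
  have hxy := eventually_deformation_invFun_eq (𝕜 := 𝕜) hη hζ
  have hx' := hasDerivAt_of_deformation_eq hη.continuousAt hζ.continuousAt hx.continuousAt hxy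
  have hacc := hasDerivAt_deriv_of_deformation_eq hη hζ hx hxy
  have hx0 := apply_zero_of_deformation_eq hxy
  have hxd := eventually_differentiableAt_of_contDiffAt_one hx
  have hxlim : Tendsto (fun t : 𝕜 => Function.invFun (deformation η ζ t) y) (𝓝 0) (𝓝 y) := by
    simpa only [hx0] using hx.continuousAt.tendsto
  refine ⟨congrArg u hx0, ?_, ?_, ?_⟩
  · filter_upwards [hxd, hxlim.eventually hu] with t hxt hut
    exact hut.comp t hxt
  · rw [← map_neg]
    exact (hu.self_of_nhds.hasFDerivAt.comp_hasDerivAt_of_eq 0 hx' hx0.symm).deriv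
  · simpa [hx'.deriv] using hasDerivAt_deriv_comp_of_eq hu hu' hxd hacc hx0

end Deformation

section Coordinates

variable {N : ℕ}

theorem clm_apply_eq_sum_single {𝕜 ι F : Type*} [NontriviallyNormedField 𝕜] [Fintype ι]
    [DecidableEq ι] [NormedAddCommGroup F] [NormedSpace 𝕜 F] (L : (ι → 𝕜) →L[𝕜] F)
    (v : ι → 𝕜) : L v = ∑ i, v i • L (Pi.single i 1) := by
  conv_lhs => rw [pi_eq_sum_univ' v, map_sum]
  simp only [map_smul]

theorem fderiv_apply_eq_sum_pdv (f : (Fin N → ℝ) → ℝ) (x v : Fin N → ℝ) :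
    fderiv ℝ f x v = ∑ i, pdv f i x * v i := by
  simp only [clm_apply_eq_sum_single _ v, smul_eq_mul, pdv, mul_comm]

theorem fderiv_fderiv_apply_eq_sum_pdv {f : (Fin N → ℝ) → ℝ} {x : Fin N → ℝ}
    (hf : DifferentiableAt ℝ (fderiv ℝ f) x) (v w : Fin N → ℝ) :
    fderiv ℝ (fderiv ℝ f) x w v = ∑ i, ∑ j, pdv (pdv f i) j x * v i * w j := by
  have hpdv (i : Fin N) : HasFDerivAt (pdv f i)
      (.comp (.apply ℝ ℝ (Pi.single i 1)) (fderiv ℝ (fderiv ℝ f) x)) x :=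
    (ContinuousLinearMap.apply ℝ ℝ (Pi.single i 1 : Fin N → ℝ)).hasFDerivAt.comp x hf.hasFDerivAt
  calc fderiv ℝ (fderiv ℝ f) x w v = ∑ i, fderiv ℝ (pdv f i) x w * v i := by
        rw [clm_apply_eq_sum_single _ v]
        simp only [(hpdv _).fderiv, ContinuousLinearMap.comp_apply,
          ContinuousLinearMap.apply_apply, smul_eq_mul, mul_comm]
    _ = ∑ i, ∑ j, pdv (pdv f i) j x * v i * w j := by
        simp only [fderiv_apply_eq_sum_pdv _ x w, Finset.sum_mul, mul_right_comm]

theorem advf_eq_fderiv_apply {η : (Fin N → ℝ) → (Fin N → ℝ)} {x : Fin N → ℝ}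
    (hη : DifferentiableAt ℝ η x) : advf η x = fderiv ℝ η x (η x) := by
  funext i
  calc advf η x i = fderiv ℝ (fun z => η z i) x (η x) := by
        simp only [advf, fderiv_apply_eq_sum_pdv, mul_comm]
    _ = fderiv ℝ η x (η x) i := by rw [fderiv_apply hη]; rfl

theorem X0_eq_fderiv {u : (Fin N → ℝ) → ℝ} {η : (Fin N → ℝ) → (Fin N → ℝ)} {y : Fin N → ℝ}
    (hu : DifferentiableAt ℝ (fderiv ℝ u) y) (hη : DifferentiableAt ℝ η y)
    (ζ : (Fin N → ℝ) → (Fin N → ℝ)) :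
    X0 u η ζ y = fderiv ℝ (fderiv ℝ u) y (η y) (η y) +
      fderiv ℝ u y ((2 : ℝ) • fderiv ℝ η y (η y) - ζ y) := by
  rw [X0, ← fderiv_fderiv_apply_eq_sum_pdv hu, ← advf_eq_fderiv_apply hη,
    fderiv_apply_eq_sum_pdv u y (_ - _)]
  rfl

end Coordinates

/-- For `u ∈ C³` bounded with bounded derivatives and the deformation
`Φ_t(x) := x + t η(x) + (t²/2) ζ(x)` (bijective for `|t| < τ`), for every `y` the function
`t ↦ u(Φ_t⁻¹(y))` is twice differentiable at `t = 0` with value `u(y)`, first derivative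
`−∇u(y)·η(y)` and second derivative `X₀(y)` at `t = 0`. -/
theorem composition_with_inverse_deformation
    (N : ℕ) (hN : 1 ≤ N)
    (η ζ : (Fin N → ℝ) → (Fin N → ℝ))
    (hη : ContDiff ℝ 3 η) (hηb : BddUpTo 3 η)
    (hζ : ContDiff ℝ 3 ζ) (hζb : BddUpTo 3 ζ)
    (u : (Fin N → ℝ) → ℝ)
    (hu : ContDiff ℝ 3 u) (hub : BddUpTo 3 u)
    (Φ : ℝ → (Fin N → ℝ) → (Fin N → ℝ))
    (hΦ : ∀ t x, Φ t x = x + t • η x + (t ^ 2 / 2) • ζ x)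
    (τ : ℝ) (hτ : 0 < τ)
    (hbij : ∀ t : ℝ, |t| < τ → Function.Bijective (Φ t)) :
    ∀ y : Fin N → ℝ, ∃ g' : ℝ → ℝ,
      u (Function.invFun (Φ 0) y) = u y ∧
      (∀ᶠ t in 𝓝 (0 : ℝ),
        HasDerivAt (fun s : ℝ => u (Function.invFun (Φ s) y)) (g' t) t) ∧
      g' 0 = -(∑ i, pdv u i y * η y i) ∧
      HasDerivAt g' (X0 u η ζ y) 0 := by
  intro y
  obtain rfl : Φ = deformation η ζ := funext₂ hΦ
  have hu' : DifferentiableAt ℝ (fderiv ℝ u) y :=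
    (hu.contDiffAt.fderiv_right (m := 2) (by norm_num)).differentiableAt two_ne_zero
  have hinj : ∀ᶠ t in 𝓝 (0 : ℝ), Function.Injective (deformation η ζ t) :=
    (eventually_abs_sub_lt 0 hτ).mono fun t ht => (hbij t (by simpa using ht)).injective
  obtain ⟨hvalue, hdiff, hfirst, hsecond⟩ := composition_with_inverse_deformation_general
    (hη.contDiffAt.of_le (by norm_num)) (hζ.contDiffAt.of_le (by norm_num))
    (.of_forall (hu.differentiable three_ne_zero)) hu' hinj
  rw [fderiv_apply_eq_sum_pdv] at hfirst
  rw [← X0_eq_fderiv hu' (hη.differentiable three_ne_zero y)] at hsecond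
  exact ⟨_, hvalue, hdiff.mono fun _ => DifferentiableAt.hasDerivAt, hfirst, hsecond⟩

end PaperAC
end

section
/- Let Ω ⊂ ℝ^N be open and bounded, let F : ℝ × ℝ^N → ℝ be of class C³, let u : ℝ^N → ℝ be bounded and of class C³ with all partial derivatives up to order 3 bounded, and let η, ζ : ℝ^N → ℝ^N be bounded and of class C³ with all partial derivatives up to order 3 bounded. Define Φ_t(x) := x + t·η(x) + (t²/2)·ζ(x), let τ > 0 be such that Φ_t is a bijection of ℝ^N for |t| < τ, set u_t(y) := u(Φ_t⁻¹(y)), and define 𝔄₁(t) := ∫_Ω F(u_t(y), ∇u_t(y)) dy for |t| < τ. Then 𝔄₁ is differentiable at t = 0 with 𝔄₁'(0) = ∫_Ω [ F_z(u, ∇u) · (−∇u·η) + Σ_i F_{p_i}(u, ∇u) · ∂/∂x_i(−∇u·η) ] dx. -/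
open Filter MeasureTheory Topology
open scoped RealInnerProductSpace

namespace PaperAC

/-!
Write `u_t = u ∘ Φ_t⁻¹`. The inverse function theorem applied to `(t, x) ↦ (t, Φ_t x)` makes
`(t, y) ↦ u_t(y)` jointly `C²` near `t = 0`. Since `u_t` is constant along `t ↦ Φ_t(x)`, at `t = 0`
it satisfies the transport equation `∂_t u_t + ∇u · η = 0`. Mixed partial derivatives commute, so
the jet `(u_t, ∇u_t)` has time derivative `(φ, ∇φ)` with `φ = -∇u · η`; the chain rule then gives
the pointwise derivative of the integrand, and compactness of the closure of `Ω` supplies the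
uniform bound needed to differentiate under the integral sign.
-/

open scoped ContDiff

section Curry

variable {𝕜 P E G : Type*} [NontriviallyNormedField 𝕜] [NormedAddCommGroup P]
  [NormedSpace 𝕜 P] [NormedAddCommGroup E] [NormedSpace 𝕜 E] [NormedAddCommGroup G]
  [NormedSpace 𝕜 G]

theorem hasFDerivAt_curry_right {f : P → E → G} {p : P} {x : E}
    (hf : DifferentiableAt 𝕜 (Function.uncurry f) (p, x)) :
    HasFDerivAt (f p)
      ((fderiv 𝕜 (Function.uncurry f) (p, x)).comp (ContinuousLinearMap.inr 𝕜 P E)) x :=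
  hf.hasFDerivAt.comp x (hasFDerivAt_prodMk_right p x)

theorem hasDerivAt_curry_left {f : 𝕜 → E → G} {t : 𝕜} {x : E}
    (hf : DifferentiableAt 𝕜 (Function.uncurry f) (t, x)) :
    HasDerivAt (fun s => f s x) (fderiv 𝕜 (Function.uncurry f) (t, x) (1, 0)) t :=
  hf.hasFDerivAt.comp_hasDerivAt (f := fun s => (s, x)) t
    ((hasDerivAt_id t).prodMk (hasDerivAt_const t x))

theorem deriv_eq_neg_fderiv_of_const_along_curve {w : 𝕜 → E → G} {γ : 𝕜 → E} {γ' : E} {t : 𝕜}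
    (hw : DifferentiableAt 𝕜 (Function.uncurry w) (t, γ t)) (hγ : HasDerivAt γ γ' t)
    (hconst : ∀ᶠ s in 𝓝 t, w s (γ s) = w t (γ t)) :
    deriv (fun s => w s (γ t)) t = -fderiv 𝕜 (w t) (γ t) γ' := by
  have along_curve : HasDerivAt (fun s => w s (γ s))
      (fderiv 𝕜 (Function.uncurry w) (t, γ t) (1, γ')) t :=
    hw.hasFDerivAt.comp_hasDerivAt (f := fun s => (s, γ s)) t
      ((hasDerivAt_id t).prodMk hγ)
  have vanishes : fderiv 𝕜 (Function.uncurry w) (t, γ t) (1, γ') = 0 :=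
    along_curve.unique ((hasDerivAt_const t (w t (γ t))).congr_of_eventuallyEq hconst)
  rw [(hasDerivAt_curry_left hw).deriv, (hasFDerivAt_curry_right hw).fderiv,
    eq_neg_iff_add_eq_zero, ContinuousLinearMap.comp_apply, ContinuousLinearMap.inr_apply,
    ← map_add, Prod.mk_add_mk, add_zero, zero_add, vanishes]

theorem eventually_differentiableAt_of_contDiffAt {f : E → G} {x : E} {n : ℕ∞ω}
    (hf : ContDiffAt 𝕜 n f x) (hn : 1 ≤ n) : ∀ᶠ y in 𝓝 x, DifferentiableAt 𝕜 f y :=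
  ((hf.of_le hn).eventually (by decide)).mono fun _ hy => hy.differentiableAt one_ne_zero

end Curry

section JointSmoothness

variable {𝕜 P E G : Type*} [RCLike 𝕜] [NormedAddCommGroup P] [NormedSpace 𝕜 P]
  [NormedAddCommGroup E] [NormedSpace 𝕜 E] [NormedAddCommGroup G] [NormedSpace 𝕜 G]

theorem hasDerivAt_fderiv_curry {w : 𝕜 → E → G} {t : 𝕜} {x : E}
    (hw : ContDiffAt 𝕜 2 (Function.uncurry w) (t, x)) :
    HasDerivAt (fun s => fderiv 𝕜 (w s) x)
      (fderiv 𝕜 (fun y => deriv (fun s => w s y) t) x) t := by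
  set D := fderiv 𝕜 (Function.uncurry w)
  have hD : DifferentiableAt 𝕜 D (t, x) :=
    (hw.fderiv_right (m := 1) (by norm_num)).differentiableAt one_ne_zero
  have differentiable_near := eventually_differentiableAt_of_contDiffAt hw one_le_two
  have space_derivative : (fun s => fderiv 𝕜 (w s) x) =ᶠ[𝓝 t]
      fun s => (D (s, x)).comp (ContinuousLinearMap.inr 𝕜 𝕜 E) :=
    ((Continuous.prodMk_left x).tendsto t |>.eventually differentiable_near).mono
      fun s hs => (hasFDerivAt_curry_right hs).fderiv
  have time_derivative : (fun y => deriv (fun s => w s y) t) =ᶠ[𝓝 x] fun y => D (t, y) (1, 0) :=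
    ((Continuous.prodMk_right t).tendsto x |>.eventually differentiable_near).mono
      fun y hy => (hasDerivAt_curry_left hy).deriv
  have symmetric (v : E) :
      fderiv 𝕜 D (t, x) (1, 0) (0, v) = fderiv 𝕜 D (t, x) (0, v) (1, 0) :=
    (hw.isSymmSndFDerivAt (by simp)).eq (1, 0) (0, v)
  have D_right : HasFDerivAt (fun y => D (t, y))
      ((fderiv 𝕜 D (t, x)).comp (ContinuousLinearMap.inr 𝕜 𝕜 E)) x :=
    hasFDerivAt_curry_right (f := fun s y => D (s, y)) hD
  have D_left : HasDerivAt (fun s => D (s, x)) (fderiv 𝕜 D (t, x) (1, 0)) t :=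
    hasDerivAt_curry_left (f := fun s y => D (s, y)) hD
  have mixed : HasDerivAt (fun s => (D (s, x)).comp (ContinuousLinearMap.inr 𝕜 𝕜 E))
      ((fderiv 𝕜 D (t, x) (1, 0)).comp (ContinuousLinearMap.inr 𝕜 𝕜 E)) t := by
    simpa using D_left.clm_comp (hasDerivAt_const t (ContinuousLinearMap.inr 𝕜 𝕜 E))
  refine (mixed.congr_of_eventuallyEq space_derivative).congr_deriv ?_
  rw [time_derivative.fderiv_eq, (D_right.clm_apply (hasFDerivAt_const _ x)).fderiv]
  ext v
  simpa using symmetric v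

theorem contDiffAt_uncurry_invFun [CompleteSpace P] [CompleteSpace E] {n : ℕ∞ω} (hn : n ≠ 0)
    {Φ : P → E → G} {p : P} {x : E} (hΦ : ContDiffAt 𝕜 n (Function.uncurry Φ) (p, x))
    {e : E ≃L[𝕜] G} (he : HasFDerivAt (Φ p) (e : E →L[𝕜] G) x)
    (hinj : ∀ᶠ q in 𝓝 p, Function.Injective (Φ q)) :
    ContDiffAt 𝕜 n (Function.uncurry fun q => Function.invFun (Φ q)) (p, Φ p x) := by
  let total : P × E → P × G := fun q => (q.1, Function.uncurry Φ q)
  let A : (P × E) ≃L[𝕜] P × G := (ContinuousLinearEquiv.refl 𝕜 P).skewProd e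
    ((fderiv 𝕜 (Function.uncurry Φ) (p, x)).comp (ContinuousLinearMap.inl 𝕜 P E))
  have total_contDiffAt : ContDiffAt 𝕜 n total (p, x) := contDiffAt_fst.prodMk hΦ
  have hΦ' : DifferentiableAt 𝕜 (Function.uncurry Φ) (p, x) := hΦ.differentiableAt hn
  have fderiv_right (v : E) : fderiv 𝕜 (Function.uncurry Φ) (p, x) (0, v) = e v :=
    DFunLike.congr_fun ((hasFDerivAt_curry_right hΦ').unique he) v
  have total_hasFDerivAt : HasFDerivAt total (A : P × E →L[𝕜] P × G) (p, x) := by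
    refine (hasFDerivAt_fst.prodMk hΦ'.hasFDerivAt).congr_fderiv ?_
    ext v <;> simp [A, fderiv_right]
  let totalInv : P × G → P × E := fun r => (r.1, Function.invFun (Φ r.1) r.2)
  have left_inverse : ∀ᶠ q in 𝓝 (p, x), totalInv (total q) = q :=
    (continuous_fst.tendsto (p, x) |>.eventually hinj).mono fun q hq =>
      Prod.ext rfl (Function.leftInverse_invFun hq q.2)
  exact ((total_contDiffAt.to_localInverse total_hasFDerivAt hn).congr_of_eventuallyEq
    ((total_contDiffAt.hasStrictFDerivAt' total_hasFDerivAt hn).localInverse_unique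
      (g := totalInv) left_inverse)).snd

end JointSmoothness

section ParametricIntegral

variable {E G : Type*} [NormedAddCommGroup E] [NormedSpace ℝ E]
  [NormedAddCommGroup G] [NormedSpace ℝ G]

theorem exists_eventually_forall_mem_norm_fderiv_le {P : Type*} [NormedAddCommGroup P]
    [NormedSpace ℝ P] {K : Set E} (hK : IsCompact K) {f : P → E → G} {p : P}
    (hf : ∀ y ∈ K, ContDiffAt ℝ 1 (Function.uncurry f) (p, y)) :
    ∃ C, ∀ᶠ q in 𝓝 p, ∀ y ∈ K, ‖fderiv ℝ (Function.uncurry f) (q, y)‖ ≤ C := by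
  have fderiv_continuousAt (y : E) (hy : y ∈ K) :
      ContinuousAt (fun r => ‖fderiv ℝ (Function.uncurry f) r‖) (p, y) :=
    ((hf y hy).fderiv_right (m := 0) (by norm_num)).continuousAt.norm
  obtain ⟨C, hC⟩ := hK.bddAbove_image (f := fun y => ‖fderiv ℝ (Function.uncurry f) (p, y)‖)
    fun y hy => ((fderiv_continuousAt y hy).comp
      (Continuous.prodMk_right p).continuousAt).continuousWithinAt
  refine ⟨C + 1, hK.eventually_forall_of_forall_eventually fun y hy => ?_⟩
  have hCy : ‖fderiv ℝ (Function.uncurry f) (p, y)‖ < C + 1 :=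
    (hC (Set.mem_image_of_mem _ hy)).trans_lt (lt_add_one C)
  exact ((fderiv_continuousAt y hy).eventually_lt_const hCy).mono fun _ => le_of_lt

theorem hasDerivAt_integral_of_contDiffAt [MeasurableSpace E] [OpensMeasurableSpace E]
    {μ : Measure E} [IsFiniteMeasure μ] {K : Set E} (hK : IsCompact K) (hμK : ∀ᵐ y ∂μ, y ∈ K)
    {f : ℝ → E → G} {t₀ : ℝ} (hf : ∀ y ∈ K, ContDiffAt ℝ 1 (Function.uncurry f) (t₀, y)) :
    HasDerivAt (fun t => ∫ y, f t y ∂μ) (∫ y, deriv (fun t => f t y) t₀ ∂μ) t₀ := by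
  have hμ : μ.restrict K = μ := Measure.restrict_eq_self_of_ae_mem hμK
  obtain ⟨C, hC⟩ := exists_eventually_forall_mem_norm_fderiv_le hK hf
  have differentiable_near : ∀ᶠ t in 𝓝 t₀, ∀ y ∈ K,
      DifferentiableAt ℝ (Function.uncurry f) (t, y) :=
    hK.eventually_forall_of_forall_eventually fun y hy =>
      eventually_differentiableAt_of_contDiffAt (hf y hy) le_rfl
  have continuousOn_slice {t : ℝ}
      (ht : ∀ y ∈ K, DifferentiableAt ℝ (Function.uncurry f) (t, y)) : ContinuousOn (f t) K :=
    fun y hy => (hasFDerivAt_curry_right (ht y hy)).continuousAt.continuousWithinAt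
  have continuousOn_deriv : ContinuousOn (fun y => deriv (fun t => f t y) t₀) K := by
    refine ContinuousOn.congr (fun y hy => ?_) fun y hy =>
      (hasDerivAt_curry_left (differentiable_near.self_of_nhds y hy)).deriv
    exact ((((hf y hy).fderiv_right (m := 0) (by norm_num)).continuousAt.comp
      (Continuous.prodMk_right t₀).continuousAt).clm_apply continuousAt_const).continuousWithinAt
  refine (hasDerivAt_integral_of_dominated_loc_of_deriv_le (hC.and differentiable_near)
    (bound := fun _ => C) (F' := fun t y => deriv (fun s => f s y) t)
    ?measurable ?integrable ?measurable_deriv ?bounded (integrable_const C) ?differentiable).2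
  case measurable =>
    filter_upwards [differentiable_near] with t ht
    exact hμ ▸ (continuousOn_slice ht).aestronglyMeasurable_of_isCompact hK hK.measurableSet
  case integrable =>
    have := (continuousOn_slice differentiable_near.self_of_nhds).integrableOn_compact (μ := μ) hK
    rwa [IntegrableOn, hμ] at this
  case measurable_deriv =>
    exact hμ ▸ continuousOn_deriv.aestronglyMeasurable_of_isCompact hK hK.measurableSet
  case bounded =>
    filter_upwards [hμK] with y hy t ht
    rw [(hasDerivAt_curry_left (ht.2 y hy)).deriv]
    simpa using ContinuousLinearMap.le_of_opNorm_le _ (ht.1 y hy) (1, 0)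
  case differentiable =>
    filter_upwards [hμK] with y hy t ht
    exact (hasDerivAt_curry_left (ht.2 y hy)).differentiableAt.hasDerivAt

end ParametricIntegral

section Jet

variable {N : ℕ}

/-- The first jet `(u, ∇u)` of a scalar function on `ℝ^N`, with values in the domain `ℝ × ℝ^N` of
the integrand `F(z, p)`. -/
noncomputable def jet (u : (Fin N → ℝ) → ℝ) (x : Fin N → ℝ) : ℝ × (Fin N → ℝ) :=
  (u x, grad u x)

theorem map_eq_sum_map_single_mul {R ι 𝓛 : Type*} [CommSemiring R] [Fintype ι] [DecidableEq ι]
    [FunLike 𝓛 (ι → R) R] [LinearMapClass 𝓛 R (ι → R) R] (L : 𝓛) (v : ι → R) :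
    L v = ∑ i, L (Pi.single i 1) * v i := by
  conv_lhs => rw [pi_eq_sum_univ' v]
  simp only [map_sum, map_smul, smul_eq_mul, mul_comm]

theorem fderiv_apply_eq_Fz_add_sum_Fp (F : ℝ × (Fin N → ℝ) → ℝ) (q v : ℝ × (Fin N → ℝ)) :
    fderiv ℝ F q v = Fz F q.1 q.2 * v.1 + ∑ i, Fp F i q.1 q.2 * v.2 i := by
  have hv : v = v.1 • ((1 : ℝ), (0 : Fin N → ℝ)) + (0, v.2) := by ext1 <;> simp
  have space_part : fderiv ℝ F q (0, v.2) = ∑ i, Fp F i q.1 q.2 * v.2 i :=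
    map_eq_sum_map_single_mul
      ((fderiv ℝ F q).comp (ContinuousLinearMap.inr ℝ ℝ (Fin N → ℝ))) v.2
  conv_lhs => rw [hv, map_add, map_smul, space_part, smul_eq_mul, mul_comm]
  rfl

theorem nGradDot_eq_neg_fderiv (u : (Fin N → ℝ) → ℝ) (η : (Fin N → ℝ) → (Fin N → ℝ))
    (x : Fin N → ℝ) : nGradDot u η x = -fderiv ℝ u x (η x) :=
  congrArg Neg.neg (map_eq_sum_map_single_mul (fderiv ℝ u x) (η x)).symm

theorem contDiffAt_jet {w : ℝ → (Fin N → ℝ) → ℝ} {t : ℝ} {y : Fin N → ℝ} {n : ℕ∞ω}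
    (hw : ContDiffAt ℝ (n + 1) (Function.uncurry w) (t, y)) :
    ContDiffAt ℝ n (Function.uncurry fun s => jet (w s)) (t, y) := by
  have total_jet : ContDiffAt ℝ n (fun q : ℝ × (Fin N → ℝ) => (Function.uncurry w q,
      fun i => fderiv ℝ (Function.uncurry w) q (0, Pi.single i 1))) (t, y) :=
    (hw.of_le le_self_add).prodMk (contDiffAt_pi.2 fun i =>
      (hw.fderiv_right le_rfl).clm_apply contDiffAt_const)
  refine total_jet.congr_of_eventuallyEq ?_
  filter_upwards [eventually_differentiableAt_of_contDiffAt hw le_add_self] with ⟨s, z⟩ hq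
  refine Prod.ext rfl (funext fun i => ?_)
  exact DFunLike.congr_fun (hasFDerivAt_curry_right hq).fderiv (Pi.single i 1)

theorem hasDerivAt_jet {w : ℝ → (Fin N → ℝ) → ℝ} {t : ℝ} {y : Fin N → ℝ}
    (hw : ContDiffAt ℝ 2 (Function.uncurry w) (t, y)) :
    HasDerivAt (fun s => jet (w s) y) (jet (fun z => deriv (fun s => w s z) t) y) t := by
  have value : HasDerivAt (fun s => w s y) (deriv (fun s => w s y) t) t :=
    (hasDerivAt_curry_left (hw.differentiableAt two_ne_zero)).differentiableAt.hasDerivAt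
  refine value.prodMk (hasDerivAt_pi.2 fun i => ?_)
  simpa [grad, pdv] using (hasDerivAt_fderiv_curry hw).clm_apply
    (hasDerivAt_const t (Pi.single i (1 : ℝ) : Fin N → ℝ))

theorem hasDerivAt_integral_comp_jet {G : Type*} [NormedAddCommGroup G] [NormedSpace ℝ G]
    {μ : Measure (Fin N → ℝ)} [IsFiniteMeasure μ] {K : Set (Fin N → ℝ)} (hK : IsCompact K)
    (hμK : ∀ᵐ y ∂μ, y ∈ K) {F : ℝ × (Fin N → ℝ) → G} (hF : ContDiff ℝ 1 F)
    {w : ℝ → (Fin N → ℝ) → ℝ} {t₀ : ℝ}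
    (hw : ∀ y ∈ K, ContDiffAt ℝ 2 (Function.uncurry w) (t₀, y)) :
    HasDerivAt (fun t => ∫ y, F (jet (w t) y) ∂μ)
      (∫ y, fderiv ℝ F (jet (w t₀) y) (jet (fun z => deriv (fun t => w t z) t₀) y) ∂μ) t₀ := by
  refine (hasDerivAt_integral_of_contDiffAt hK hμK (f := fun t y => F (jet (w t) y))
    fun y hy => ?_).congr_deriv (integral_congr_ae ?_)
  · exact hF.contDiffAt.comp (t₀, y) (contDiffAt_jet (n := 1) (hw y hy))
  · filter_upwards [hμK] with y hy
    have hFy := (hF.differentiable one_ne_zero (jet (w t₀) y)).hasFDerivAt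
    exact (hFy.comp_hasDerivAt t₀ (hasDerivAt_jet (hw y hy))).deriv

end Jet

section InnerDeformation

variable {E : Type*} [NormedAddCommGroup E] [NormedSpace ℝ E]

/-- A `C^n` deformation `Φ_t` of the identity of `E` with initial velocity `η`. Smoothness is joint
in time and space, but only required near time `0`, and so is injectivity. -/
structure IsInnerDeformation (n : ℕ∞ω) (Φ : ℝ → E → E) (η : E → E) : Prop where
  contDiffAt : ∀ x, ContDiffAt ℝ n (Function.uncurry Φ) (0, x)
  zero_apply : ∀ x, Φ 0 x = x
  hasDerivAt : ∀ x, HasDerivAt (fun t => Φ t x) (η x) 0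
  eventually_injective : ∀ᶠ t in 𝓝 0, Function.Injective (Φ t)

theorem isInnerDeformation_secondOrder {n : ℕ∞ω} {η ζ : E → E} (hη : ContDiff ℝ n η)
    (hζ : ContDiff ℝ n ζ) {Φ : ℝ → E → E}
    (hΦ : ∀ t x, Φ t x = x + t • η x + (t ^ 2 / 2) • ζ x)
    (hinj : ∀ᶠ t in 𝓝 0, Function.Injective (Φ t)) : IsInnerDeformation n Φ η := by
  obtain rfl : Φ = fun t x => x + t • η x + (t ^ 2 / 2) • ζ x := funext₂ hΦ
  refine ⟨fun x => ?_, fun x => by simp, fun x => ?_, hinj⟩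
  · have : ContDiff ℝ n (Function.uncurry fun (t : ℝ) x => x + t • η x + (t ^ 2 / 2) • ζ x) := by
      unfold Function.uncurry
      fun_prop
    exact this.contDiffAt
  · have linear := ((hasDerivAt_id (0 : ℝ)).smul_const (η x)).const_add x
    have quadratic := (((hasDerivAt_id (0 : ℝ)).pow 2).div_const 2).smul_const (ζ x)
    simpa using linear.fun_add quadratic

namespace IsInnerDeformation

variable {n : ℕ∞ω} {Φ : ℝ → E → E} {η : E → E}

theorem invFun_zero_apply (hΦ : IsInnerDeformation n Φ η) (x : E) :
    Function.invFun (Φ 0) x = x := by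
  simpa only [hΦ.zero_apply] using
    Function.leftInverse_invFun hΦ.eventually_injective.self_of_nhds x

theorem contDiffAt_invFun [CompleteSpace E] (hΦ : IsInnerDeformation n Φ η) (hn : n ≠ 0) (x : E) :
    ContDiffAt ℝ n (Function.uncurry fun t => Function.invFun (Φ t)) (0, x) := by
  have hid : HasFDerivAt (Φ 0) (ContinuousLinearEquiv.refl ℝ E : E →L[ℝ] E) x :=
    (hasFDerivAt_id x).congr_of_eventuallyEq (Eventually.of_forall hΦ.zero_apply)
  simpa only [hΦ.zero_apply] using
    contDiffAt_uncurry_invFun hn (hΦ.contDiffAt x) hid hΦ.eventually_injective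

theorem contDiffAt_comp_invFun [CompleteSpace E] {G : Type*} [NormedAddCommGroup G]
    [NormedSpace ℝ G] {u : E → G} (hΦ : IsInnerDeformation n Φ η) (hn : n ≠ 0)
    {x : E} (hu : ContDiffAt ℝ n u x) :
    ContDiffAt ℝ n (Function.uncurry fun t y => u (Function.invFun (Φ t) y)) (0, x) :=
  ContDiffAt.comp (0, x) (by simpa [Function.uncurry, hΦ.invFun_zero_apply] using hu)
    (hΦ.contDiffAt_invFun hn x)

theorem deriv_comp_invFun [CompleteSpace E] {G : Type*} [NormedAddCommGroup G]
    [NormedSpace ℝ G] {u : E → G} (hΦ : IsInnerDeformation n Φ η) (hn : n ≠ 0)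
    {x : E} (hu : DifferentiableAt ℝ u x) :
    deriv (fun t => u (Function.invFun (Φ t) x)) 0 = -fderiv ℝ u x (η x) := by
  have hw : DifferentiableAt ℝ (Function.uncurry fun t y => u (Function.invFun (Φ t) y)) (0, x) :=
    DifferentiableAt.comp (0, x) (by simpa [Function.uncurry, hΦ.invFun_zero_apply] using hu)
      ((hΦ.contDiffAt_invFun hn x).differentiableAt hn)
  have transported : ∀ᶠ t in 𝓝 0, u (Function.invFun (Φ t) (Φ t x)) =
      u (Function.invFun (Φ 0) (Φ 0 x)) :=
    hΦ.eventually_injective.mono fun t ht => by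
      rw [Function.leftInverse_invFun ht x, hΦ.zero_apply, hΦ.invFun_zero_apply]
  simpa only [hΦ.zero_apply, hΦ.invFun_zero_apply] using
    deriv_eq_neg_fderiv_of_const_along_curve (w := fun t y => u (Function.invFun (Φ t) y))
      (γ := fun t => Φ t x) (by rwa [hΦ.zero_apply]) (hΦ.hasDerivAt x) transported

end IsInnerDeformation

end InnerDeformation

theorem first_inner_variation_direct_general {N : ℕ} {Ω : Set (Fin N → ℝ)}
    (hΩ : Bornology.IsBounded Ω) {F : ℝ × (Fin N → ℝ) → ℝ} (hF : ContDiff ℝ 1 F)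
    {u : (Fin N → ℝ) → ℝ} (hu : ContDiff ℝ 2 u) {Φ : ℝ → (Fin N → ℝ) → (Fin N → ℝ)}
    {η : (Fin N → ℝ) → (Fin N → ℝ)} (hΦ : IsInnerDeformation 2 Φ η) :
    HasDerivAt (innerA Ω F u Φ)
      (∫ x in Ω,
        (Fz F (u x) (grad u x) * nGradDot u η x
          + ∑ i, Fp F i (u x) (grad u x) * pdv (nGradDot u η) i x)) 0 := by
  have : IsFiniteMeasure (volume.restrict Ω) := isFiniteMeasure_restrict.2 hΩ.measure_lt_top.ne
  have ae_mem_closure : ∀ᵐ x ∂volume.restrict Ω, x ∈ closure Ω :=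
    ae_restrict_of_ae_restrict_of_subset subset_closure
      (ae_restrict_mem isClosed_closure.measurableSet)
  have variation : (fun x => deriv (fun t => u (Function.invFun (Φ t) x)) 0) = nGradDot u η :=
    funext fun x => by
      rw [hΦ.deriv_comp_invFun two_ne_zero (hu.differentiable two_ne_zero x),
        nGradDot_eq_neg_fderiv]
  have key := hasDerivAt_integral_comp_jet hΩ.isCompact_closure ae_mem_closure hF
    (w := fun t y => u (Function.invFun (Φ t) y)) fun _ _ =>
      hΦ.contDiffAt_comp_invFun two_ne_zero hu.contDiffAt
  simp only [hΦ.invFun_zero_apply, variation, fderiv_apply_eq_Fz_add_sum_Fp] at key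
  exact key

/-- First inner variation via direct calculation: with
`𝔄₁(t) := ∫_Ω F(u_t, ∇u_t)` where `u_t = u ∘ Φ_t⁻¹`, `𝔄₁` is differentiable at `t = 0` and
`𝔄₁'(0) = ∫_Ω [F_z(u,∇u)(−∇u·η) + ∑_i F_{p_i}(u,∇u) ∂_i(−∇u·η)] dx`. -/
theorem first_inner_variation_direct
    (N : ℕ) (Ω : Set (Fin N → ℝ)) (hΩo : IsOpen Ω) (hΩb : Bornology.IsBounded Ω)
    (F : ℝ × (Fin N → ℝ) → ℝ) (hF : ContDiff ℝ 3 F)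
    (u : (Fin N → ℝ) → ℝ) (hu : ContDiff ℝ 3 u) (hub : BddUpTo 3 u)
    (η ζ : (Fin N → ℝ) → (Fin N → ℝ))
    (hη : ContDiff ℝ 3 η) (hηb : BddUpTo 3 η)
    (hζ : ContDiff ℝ 3 ζ) (hζb : BddUpTo 3 ζ)
    (Φ : ℝ → (Fin N → ℝ) → (Fin N → ℝ))
    (hΦ : ∀ t x, Φ t x = x + t • η x + (t ^ 2 / 2) • ζ x)
    (τ : ℝ) (hτ : 0 < τ)
    (hbij : ∀ t : ℝ, |t| < τ → Function.Bijective (Φ t)) :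
    HasDerivAt (innerA Ω F u Φ)
      (∫ x in Ω,
        (Fz F (u x) (grad u x) * nGradDot u η x
          + ∑ i, Fp F i (u x) (grad u x) * pdv (nGradDot u η) i x)) 0 := by
  have hinj : ∀ᶠ t in 𝓝 0, Function.Injective (Φ t) :=
    ((continuous_abs.tendsto' 0 0 abs_zero).eventually_lt_const hτ).mono
      fun t ht => (hbij t ht).injective
  exact first_inner_variation_direct_general hΩb (hF.of_le (by norm_num)) (hu.of_le (by norm_num))
    (isInnerDeformation_secondOrder (hη.of_le (by norm_num)) (hζ.of_le (by norm_num)) hΦ hinj)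

end PaperAC
end
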